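/- Under Assumption 3, the feasible region X is a lattice with respect to the componentwise maximum and minimum: if w, w′ ∈ X, then the vectors w ∧ w′ (componentwise maximum) and w ∨ w′ (componentwise minimum) both belong to X. -/

import Mathlib

/-!
The function `ell` is monotone. Below the critical speed it is affine with slope `a = 1 - h * γ`;
above it, in the variable `s = √w`, it is `a * s ^ 2 + K / s` with `K = h * Pmax / M`, and Assumption 3
says exactly that `2 * a * s ^ 3 ≥ K` at the critical speed, hence at every larger one. The two
branches agree at the critical speed. Each constraint thus bounds `w (j + 1)` above or below by a
nondecreasing function of `w j`, and such constraints survive componentwise maxima and minima.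
-/

/-- The function ℓ from the speed-planning problem. -/
noncomputable def ell (h γ g M Pmax μ w : ℝ) : ℝ :=
  if w ≤ (Pmax / (M * g * μ)) ^ 2 then (1 - h * γ) * w + h * g * μ
  else (1 - h * γ) * w + h * Pmax / (M * Real.sqrt w)

/-- Membership in the feasible region `X`: `w^min_i ≤ w_i ≤ w^max_i` for all `i`, and
for `j = 1,…,n−1` both `w_{j+1} ≤ ℓ(w_j) − h g (sin α_j + c)` and
`w_{j+1} ≥ (1−hγ)w_j − h g (sin α_j + c + μ)`. -/
def memX (n : ℕ) (h γ g M Pmax μ c : ℝ) (α wmin wmax w : ℕ → ℝ) : Prop :=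
  (∀ i, 1 ≤ i → i ≤ n → wmin i ≤ w i ∧ w i ≤ wmax i) ∧
  (∀ j, 1 ≤ j → j ≤ n - 1 →
    w (j + 1) ≤ ell h γ g M Pmax μ (w j) - h * g * (Real.sin (α j) + c) ∧
    (1 - h * γ) * w j - h * g * (Real.sin (α j) + c + μ) ≤ w (j + 1))

/-- The expression `a * s ^ 2 + K / s` is nondecreasing in `s` from the point where its derivative
`2 * a * s - K / s ^ 2` becomes nonnegative. -/
lemma sq_add_div_le {a K r s t : ℝ} (hr : 0 < r) (ha : 0 ≤ a) (hK : K ≤ a * (2 * r ^ 3))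
    (hrs : r ≤ s) (hst : s ≤ t) : a * s ^ 2 + K / s ≤ a * t ^ 2 + K / t := by
  have hs : 0 < s := hr.trans_le hrs
  have ht : 0 < t := hs.trans_le hst
  have h1 : r ^ 3 ≤ s ^ 3 := by gcongr
  have h2 : 2 * s ^ 3 ≤ (s + t) * (s * t) := by
    have : (s + s) * (s * s) ≤ (s + t) * (s * t) := by gcongr
    linarith [this, show (s + s) * (s * s) = 2 * s ^ 3 by ring]
  have h3 : K ≤ a * ((s + t) * (s * t)) :=
    hK.trans (mul_le_mul_of_nonneg_left (by linarith) ha)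
  have h4 : a * t ^ 2 + K / t - (a * s ^ 2 + K / s)
      = (t - s) * (a * ((s + t) * (s * t)) - K) / (s * t) := by
    field_simp
    ring
  have h5 : 0 ≤ (t - s) * (a * ((s + t) * (s * t)) - K) / (s * t) :=
    div_nonneg (mul_nonneg (by linarith) (by linarith)) (by positivity)
  linarith

/-- Assumption 3 with the real power and the quotient cleared, `Pmax / (M * g * μ)` being the
square root of the critical speed. -/
lemma assumption3_cleared {h γ g M Pmax μ : ℝ} (hg : 0 < g) (hM : 0 < M) (hP : 0 < Pmax)
    (hμ : 0 < μ)
    (hA3 : 0 ≤ 1 - h * γ - h * Pmax / (2 * M * ((Pmax / (M * g * μ)) ^ 2) ^ ((3:ℝ)/2))) :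
    h * Pmax / M ≤ (1 - h * γ) * (2 * (Pmax / (M * g * μ)) ^ 3) := by
  have hr : 0 < Pmax / (M * g * μ) := by positivity
  generalize Pmax / (M * g * μ) = r at hr hA3
  have hpow : (r ^ 2) ^ ((3:ℝ)/2) = r ^ 3 := by
    rw [← Real.rpow_natCast r 2, ← Real.rpow_mul hr.le, ← Real.rpow_natCast r 3]
    norm_num
  rw [hpow] at hA3
  rw [← div_le_iff₀ (by positivity)]
  have : h * Pmax / M / (2 * r ^ 3) = h * Pmax / (2 * M * r ^ 3) := by
    field_simp
  linarith

lemma slope_nonneg {h γ g M Pmax μ : ℝ} (hh : 0 < h) (hM : 0 < M) (hP : 0 < Pmax)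
    (hA3 : 0 ≤ 1 - h * γ - h * Pmax / (2 * M * ((Pmax / (M * g * μ)) ^ 2) ^ ((3:ℝ)/2))) :
    0 ≤ 1 - h * γ := by
  have : 0 ≤ h * Pmax / (2 * M * ((Pmax / (M * g * μ)) ^ 2) ^ ((3:ℝ)/2)) := by positivity
  linarith

lemma ell_mono {h γ g M Pmax μ : ℝ} (hh : 0 < h) (hg : 0 < g) (hM : 0 < M) (hP : 0 < Pmax)
    (hμ : 0 < μ)
    (hA3 : 0 ≤ 1 - h * γ - h * Pmax / (2 * M * ((Pmax / (M * g * μ)) ^ 2) ^ ((3:ℝ)/2))) :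
    Monotone (ell h γ g M Pmax μ) := by
  have ha := slope_nonneg hh hM hP hA3
  have hK := assumption3_cleared hg hM hP hμ hA3
  have hr : 0 < Pmax / (M * g * μ) := by positivity
  -- The two branches agree at the critical speed.
  have hjoin : h * g * μ = h * Pmax / M / (Pmax / (M * g * μ)) := by
    field_simp
  intro x y hxy
  unfold ell
  generalize Pmax / (M * g * μ) = r at *
  have hax : (1 - h * γ) * x ≤ (1 - h * γ) * y := mul_le_mul_of_nonneg_left hxy ha
  have above : ∀ z, r ^ 2 < z → r ≤ √z ∧ √z ^ 2 = z := fun z hz =>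
    ⟨Real.le_sqrt_of_sq_le hz.le, Real.sq_sqrt ((sq_nonneg r).trans hz.le)⟩
  simp only [← div_div]
  split_ifs with hx hy hy
  · linarith
  · obtain ⟨hry, hsq⟩ := above y (not_le.mp hy)
    have key := sq_add_div_le hr ha hK le_rfl hry
    have hxr : (1 - h * γ) * x ≤ (1 - h * γ) * r ^ 2 := mul_le_mul_of_nonneg_left hx ha
    rw [hsq] at key
    linarith
  · exact absurd (hxy.trans hy) hx
  · obtain ⟨hrx, hsx⟩ := above x (not_le.mp hx)
    obtain ⟨-, hsy⟩ := above y (not_le.mp hy)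
    have key := sq_add_div_le hr ha hK hrx (Real.sqrt_le_sqrt hxy)
    rwa [hsx, hsy] at key


/-- under Assumption 3, the feasible region `X` is a lattice with respect
to the componentwise maximum and minimum: if `w, w′ ∈ X`, then both the componentwise
maximum and the componentwise minimum of `w` and `w′` belong to `X`. -/
theorem X_is_lattice (n : ℕ) (hn : 2 ≤ n)
    (h γ g M Pmax μ c winit wfin : ℝ)
    (hh : 0 < h) (hg : 0 < g) (hM : 0 < M) (hP : 0 < Pmax) (hμ : 0 < μ)
    (hγ : 0 ≤ γ) (hc : 0 ≤ c) (hwinit : 0 ≤ winit) (hwfin : 0 ≤ wfin)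
    (hA3 : 0 ≤ 1 - h * γ - h * Pmax / (2 * M * ((Pmax / (M * g * μ)) ^ 2) ^ ((3:ℝ)/2)))
    (α wmin wmax : ℕ → ℝ)
    (hwmaxpos : ∀ i, 1 ≤ i → i ≤ n → 0 ≤ wmax i)
    (hwmax1 : wmax 1 = winit) (hwmaxn : wmax n = wfin)
    (hwmin1 : wmin 1 = winit) (hwminn : wmin n = wfin)
    (hwminmid : ∀ i, 2 ≤ i → i ≤ n - 1 → wmin i = 0)
    (w w' : ℕ → ℝ)
    (hw : memX n h γ g M Pmax μ c α wmin wmax w)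
    (hw' : memX n h γ g M Pmax μ c α wmin wmax w') :
    memX n h γ g M Pmax μ c α wmin wmax (fun i => max (w i) (w' i)) ∧
    memX n h γ g M Pmax μ c α wmin wmax (fun i => min (w i) (w' i)) := by
  have hmono := ell_mono hh hg hM hP hμ hA3
  have hlin : Monotone fun x : ℝ => (1 - h * γ) * x := fun x y hxy =>
    mul_le_mul_of_nonneg_left hxy (slope_nonneg hh hM hP hA3)
  obtain ⟨hb, hd⟩ := hw
  obtain ⟨hb', hd'⟩ := hw'
  refine ⟨⟨fun i h1 hi => ?_, fun j h1 hj => ?_⟩, ⟨fun i h1 hi => ?_, fun j h1 hj => ?_⟩⟩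
  · exact ⟨le_max_of_le_left (hb i h1 hi).1, max_le (hb i h1 hi).2 (hb' i h1 hi).2⟩
  · have u := hd j h1 hj
    have u' := hd' j h1 hj
    have e := hmono.map_max (a := w j) (b := w' j)
    have f := hlin.map_max (a := w j) (b := w' j)
    dsimp only at f ⊢
    rw [e, f, ← max_sub_sub_right, ← max_sub_sub_right]
    exact ⟨max_le_max u.1 u'.1, max_le_max u.2 u'.2⟩
  · exact ⟨le_min (hb i h1 hi).1 (hb' i h1 hi).1, min_le_of_left_le (hb i h1 hi).2⟩
  · have u := hd j h1 hj
    have u' := hd' j h1 hj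
    have e := hmono.map_min (a := w j) (b := w' j)
    have f := hlin.map_min (a := w j) (b := w' j)
    dsimp only at f ⊢
    rw [e, f, ← min_sub_sub_right, ← min_sub_sub_right]
    exact ⟨min_le_min u.1 u'.1, min_le_min u.2 u'.2⟩
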